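/- Let G be a connected P5-free finite simple graph admitting a proper perfect edge dominating set P with associated 3-coloring (B,Y,W). Then there exist vertices v1, v2, v3 of G such that v1v2 and v2v3 are edges, v1v3 is a non-edge, {v1,v2,v3} is a dominating set of G, and the triple of colors (c(v1), c(v2), c(v3)) with respect to (B,Y,W) is one of: (B,B,Y), (Y,B,B), (B,Y,W), (W,Y,B), (Y,B,Y), (W,Y,W), (Y,W,Y). -/

import Mathlib

/-- An edge `e` dominates an edge `f` if they share an endpoint (in particular,
every edge dominates itself). -/
def edgeDom {V : Type*} (e f : Sym2 V) : Prop := ∃ v, v ∈ e ∧ v ∈ f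

/-- `P` is a perfect edge dominating set of `G`: `P ⊆ E(G)` and every edge of `G`
not in `P` is dominated by exactly one edge of `P`. -/
def IsPEDS {V : Type*} (G : SimpleGraph V) (P : Set (Sym2 V)) : Prop :=
  P ⊆ G.edgeSet ∧ ∀ f ∈ G.edgeSet, f ∉ P → ∃! e, e ∈ P ∧ edgeDom e f

/-- A black vertex: incident to at least two edges of `P`. -/
def Blackv {V : Type*} (P : Set (Sym2 V)) (v : V) : Prop :=
  ∃ e ∈ P, ∃ f ∈ P, e ≠ f ∧ v ∈ e ∧ v ∈ f

/-- A yellow vertex: incident to exactly one edge of `P`. -/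
def Yellowv {V : Type*} (P : Set (Sym2 V)) (v : V) : Prop := ∃! e, e ∈ P ∧ v ∈ e

/-- A white vertex: incident to no edge of `P`. -/
def Whitev {V : Type*} (P : Set (Sym2 V)) (v : V) : Prop := ∀ e ∈ P, v ∉ e


/-- `D` is a (vertex) dominating set of `G`. -/
def IsDominating {V : Type*} (G : SimpleGraph V) (D : Set V) : Prop :=
  ∀ v : V, v ∈ D ∨ ∃ u ∈ D, G.Adj u v

/-- A graph is `P₅`-free if it contains no induced subgraph isomorphic to the
path on `5` vertices. -/
def P5Free {V : Type*} (G : SimpleGraph V) : Prop :=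
  IsEmpty (SimpleGraph.pathGraph 5 ↪g G)

theorem p5_aux {V : Type*} {G : SimpleGraph V} (h : P5Free G) (a b c d e : V)
    (h1 : G.Adj a b) (h2 : G.Adj b c) (h3 : G.Adj c d) (h4 : G.Adj d e)
    (n1 : ¬ G.Adj a c) (n2 : ¬ G.Adj a d) (n3 : ¬ G.Adj a e)
    (n4 : ¬ G.Adj b d) (n5 : ¬ G.Adj b e) (n6 : ¬ G.Adj c e) : False := by
  have hs : ∀ x y, G.Adj x y → G.Adj y x := fun x y h => h.symm
  have hi : ∀ x, ¬ G.Adj x x := fun x => G.irrefl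
  have key : ∀ i j : Fin 5, G.Adj (![a,b,c,d,e] i) (![a,b,c,d,e] j) ↔
      (SimpleGraph.pathGraph 5).Adj i j := by
    intro i j
    rw [SimpleGraph.pathGraph_adj]
    fin_cases i <;> fin_cases j <;> simp <;> grind
  have inj : Function.Injective (![a,b,c,d,e] : Fin 5 → V) := by
    intro i j
    fin_cases i <;> fin_cases j <;> simp <;> grind
  exact h.false ⟨⟨_, inj⟩, key _ _⟩

theorem conn_aux {V : Type*} {G : SimpleGraph V} (hc : G.Connected) (S : V → Prop)
    (a : V) (ha : S a) (hS : ∀ u v, S u → G.Adj u v → S v) (v : V) : S v := by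
  obtain ⟨p⟩ := hc.preconnected a v
  induction p with
  | nil => exact ha
  | cons h p ih => exact ih (hS _ _ ha h)

theorem core_aux {V : Type*} [Fintype V] (G : SimpleGraph V)
    (hc : G.Connected) (hfree : P5Free G) (B Y W : V → Prop)
    (hcol : ∀ v, B v ∨ Y v ∨ W v)
    (hBY : ∀ v, B v → ¬ Y v) (hBWd : ∀ v, B v → ¬ W v) (hYW : ∀ v, Y v → ¬ W v)
    (hBW : ∀ u v, B u → W v → ¬ G.Adj u v) (hWW : ∀ u v, W u → W v → ¬ G.Adj u v)
    (hU : ∀ v u u', Y v → G.Adj v u → G.Adj v u' → ¬ W u → ¬ W u' → u = u')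
    (hPart : ∀ v, Y v → (¬ ∃ b, B b ∧ G.Adj b v) → ∃ q, Y q ∧ G.Adj v q)
    (hB : ∃ v, B v) (hW : ∃ v, W v) :
    ∃ b y w, G.Adj b y ∧ G.Adj y w ∧ B b ∧ Y y ∧ W w ∧ IsDominating G {b, y, w} := by
  have p5 := p5_aux hfree
  have hs : ∀ x y, G.Adj x y → G.Adj y x := fun x y h => h.symm
  -- an active yellow vertex
  have hact : ∃ b y w, B b ∧ Y y ∧ W w ∧ G.Adj b y ∧ G.Adj y w := by
    by_contra hn
    push Not at hn
    obtain ⟨b, hb⟩ := hB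
    obtain ⟨w, hw⟩ := hW
    have := conn_aux hc (fun v => B v ∨ (Y v ∧ ∃ b, B b ∧ G.Adj b v)) b (Or.inl hb) (by
      rintro u v (hu | ⟨hu, b', hb', hb'u⟩) huv
      · grind
      · rcases hcol v with h | h | h
        · exact Or.inl h
        · have := hU u b' v hu hb'u.symm huv (hBWd _ hb') (hYW _ h)
          grind
        · exact absurd huv (hn _ _ _ hb' hu h hb'u)) w
    grind
  have two : ∀ b y w b' y', B b → Y y → W w → B b' → Y y' → G.Adj b y → G.Adj y w →
      G.Adj w y' → G.Adj y' b' → b = b' ∨ G.Adj b b' := by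
    intro b y w b' y' hb hy hw hb' hy' h1 h2 h3 h4
    by_contra hn
    push Not at hn
    have e1 : ¬ G.Adj b y' := fun h => hn.1 (hU y' b b' hy' h.symm h4 (hBWd _ hb) (hBWd _ hb'))
    have e2 : ¬ G.Adj y b' := fun h => hn.1 (hU y b b' hy h1.symm h (hBWd _ hb) (hBWd _ hb'))
    have e3 : ¬ G.Adj y y' := fun h => by
      have := hU y b y' hy h1.symm h (hBWd _ hb) (hYW _ hy'); grind
    exact p5 b y w y' b' h1 h2 h3 h4 (hBW _ _ hb hw) e1 hn.2 e3 e2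
      (fun h => hBW _ _ hb' hw h.symm)
  have twin : ∀ b y w p p', B b → Y y → W w → Y p → Y p' → G.Adj b y → G.Adj y w →
      G.Adj w p → G.Adj p p' → G.Adj w p' := by
    intro b y w p p' hb hy hw hp hp' h1 h2 h3 h4
    by_contra hn
    have e1 : ¬ G.Adj b p := fun h => by
      have := hU p b p' hp h.symm h4 (hBWd _ hb) (hYW _ hp'); grind
    have e1' : ¬ G.Adj b p' := fun h => by
      have := hU p' b p hp' h.symm h4.symm (hBWd _ hb) (hYW _ hp); grind
    have e2 : ¬ G.Adj y p := fun h => by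
      have := hU y b p hy h1.symm h (hBWd _ hb) (hYW _ hp); grind
    have e2' : ¬ G.Adj y p' := fun h => by
      have := hU y b p' hy h1.symm h (hBWd _ hb) (hYW _ hp'); grind
    exact p5 b y w p p' h1 h2 h3 h4 (hBW _ _ hb hw) e1 e1' e2 e2' hn
  have share : ∀ b y w p p' w', B b → Y y → W w → Y p → Y p' → W w' → G.Adj b y → G.Adj y w →
      G.Adj w p → G.Adj p p' → G.Adj p w' → G.Adj y w' := by
    intro b y w p p' w' hb hy hw hp hp' hw' h1 h2 h3 h4 h5
    by_contra hn
    have e1 : ¬ G.Adj b p := fun h => by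
      have := hU p b p' hp h.symm h4 (hBWd _ hb) (hYW _ hp'); grind
    have e2 : ¬ G.Adj y p := fun h => by
      have := hU y b p hy h1.symm h (hBWd _ hb) (hYW _ hp); grind
    exact p5 b y w p w' h1 h2 h3 h5 (hBW _ _ hb hw) e1 (hBW _ _ hb hw') e2 hn (hWW _ _ hw hw')
  have far : ∀ b y w b' x, B b → Y y → W w → B b' → B x → G.Adj b y → G.Adj y w →
      G.Adj b b' → G.Adj b' x → x = b ∨ G.Adj b x := by
    intro b y w b' x hb hy hw hb' hx h1 h2 h3 h4
    by_contra hn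
    push Not at hn
    have e1 : ¬ G.Adj y b' := fun h => by
      have := hU y b b' hy h1.symm h (hBWd _ hb) (hBWd _ hb'); subst this; exact G.irrefl h3
    have e2 : ¬ G.Adj y x := fun h => by
      have := hU y b x hy h1.symm h (hBWd _ hb) (hBWd _ hx); grind
    exact p5 w y b b' x h2.symm h1.symm h3 h4 (fun h => hBW _ _ hb hw h.symm)
      (fun h => hBW _ _ hb' hw h.symm) (fun h => hBW _ _ hx hw h.symm) e1 e2 hn.2
  have four : ∀ b y w b' x, B b → Y y → W w → B b' → Y x → G.Adj b y → G.Adj y w →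
      G.Adj b b' → G.Adj b' x → G.Adj w x := by
    intro b y w b' x hb hy hw hb' hx h1 h2 h3 h4
    by_contra hn
    have e1 : ¬ G.Adj y b' := fun h => by
      have := hU y b b' hy h1.symm h (hBWd _ hb) (hBWd _ hb'); subst this; exact G.irrefl h3
    have e2 : ¬ G.Adj y x := fun h => by
      have := hU y b x hy h1.symm h (hBWd _ hb) (hYW _ hx); grind
    have e3 : ¬ G.Adj b x := fun h => by
      have := hU x b b' hx h.symm h4.symm (hBWd _ hb) (hBWd _ hb'); subst this; exact G.irrefl h3
    exact p5 w y b b' x h2.symm h1.symm h3 h4 (fun h => hBW _ _ hb hw h.symm)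
      (fun h => hBW _ _ hb' hw h.symm) hn e1 e2 e3
  -- the global structure around an active triple
  have glob : ∀ b y w, B b → Y y → W w → G.Adj b y → G.Adj y w → ∀ v,
      (B v ∧ (v = b ∨ G.Adj b v)) ∨ (Y v ∧ ∃ b', B b' ∧ G.Adj b' v) ∨
      (W v ∧ ∃ y', Y y' ∧ G.Adj y' v ∧ ∃ b', B b' ∧ G.Adj b' y') ∨
      (Y v ∧ (∃ q, Y q ∧ G.Adj v q) ∧ ∃ w', W w' ∧ G.Adj w' v) := by
    intro b y w hb hy hw h1 h2 v
    have := conn_aux hc (fun v =>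
      (B v ∧ (v = b ∨ G.Adj b v)) ∨ (Y v ∧ ∃ b', B b' ∧ G.Adj b' v ∧ (b' = b ∨ G.Adj b b')) ∨
      (W v ∧ ∃ y', Y y' ∧ G.Adj y' v ∧ ∃ b', B b' ∧ G.Adj b' y' ∧ (b' = b ∨ G.Adj b b')) ∨
      (Y v ∧ (∃ q, Y q ∧ G.Adj v q) ∧ ∃ w', W w' ∧ G.Adj w' v ∧
        ∃ y', Y y' ∧ G.Adj y' w' ∧ ∃ b', B b' ∧ G.Adj b' y' ∧ (b' = b ∨ G.Adj b b')))
      b (Or.inl ⟨hb, Or.inl rfl⟩) (by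
      have ext : ∀ b' x, B b' → B x → (b' = b ∨ G.Adj b b') → G.Adj b' x →
          (x = b ∨ G.Adj b x) := by
        rintro b' x hb' hx (rfl | h) hbx
        · exact Or.inr hbx
        · exact far b y w b' x hb hy hw hb' hx h1 h2 h hbx
      rintro u v (⟨hu, hu'⟩ | ⟨hu, b', hb', hb'u, hbb⟩ | ⟨hu, y', hy', hyu, b', hb', hby, hbb⟩ |
        ⟨hu, ⟨q, hq, huq⟩, w', hw', hwu, y', hy', hyw, b', hb', hby, hbb⟩) huv
      · rcases hcol v with h | h | h
        · exact Or.inl ⟨h, ext u v hu h hu' huv⟩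
        · exact Or.inr (Or.inl ⟨h, u, hu, huv, hu'⟩)
        · exact absurd huv (hBW _ _ hu h)
      · by_cases h : W v
        · exact Or.inr (Or.inr (Or.inl ⟨h, u, hu, huv, b', hb', hb'u, hbb⟩))
        · have := hU u b' v hu hb'u.symm huv (hBWd _ hb') h
          subst this
          exact Or.inl ⟨hb', hbb⟩
      · have hv : Y v := by
          rcases hcol v with h | h | h
          · exact absurd huv.symm (hBW _ _ h hu)
          · exact h
          · exact absurd huv (hWW _ _ hu h)
        by_cases h : ∃ b2, B b2 ∧ G.Adj b2 v
        · obtain ⟨b2, hb2, hb2v⟩ := h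
          refine Or.inr (Or.inl ⟨hv, b2, hb2, hb2v, ?_⟩)
          rcases two b' y' u b2 v hb' hy' hu hb2 hv hby hyu huv hb2v.symm with h | h
          · exact h ▸ hbb
          · exact ext b' b2 hb' hb2 hbb h
        · have hq : ∃ q, Y q ∧ G.Adj v q := hPart v hv h
          exact Or.inr (Or.inr (Or.inr ⟨hv, hq, u, hu, huv, y', hy', hyu, b', hb', hby, hbb⟩))
      · by_cases h : W v
        · exact Or.inr (Or.inr (Or.inl ⟨h, y',  hy',
            share b' y' w' u q v hb' hy' hw' hu hq h hby hyw hwu huq huv, b', hb', hby, hbb⟩))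
        · have := hU u q v hu huq huv (hYW _ hq) h
          subst this
          exact Or.inr (Or.inr (Or.inr ⟨hq, ⟨u, hu, huq.symm⟩, w', hw',
            twin b' y' w' u q hb' hy' hw' hu hq hby hyw hwu huq, y', hy', hyw, b', hb', hby, hbb⟩))
      ) v
    rcases this with h | ⟨h, b', h', h'', -⟩ | ⟨h, y', h', h'', b', h3, h4, -⟩ |
      ⟨h, h', w', h3, h4, -⟩
    · exact Or.inl h
    · exact Or.inr (Or.inl ⟨h, b', h', h''⟩)
    · exact Or.inr (Or.inr (Or.inl ⟨h, y', h', h'', b', h3, h4⟩))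
    · exact Or.inr (Or.inr (Or.inr ⟨h, h', w', h3, h4⟩))
  -- choose y with maximal white neighbourhood
  obtain ⟨b0, y0, w0, hb0, hy0, hw0, h10, h20⟩ := hact
  have g0 := glob b0 y0 w0 hb0 hy0 hw0 h10 h20
  obtain ⟨y, ⟨hy, b, hb, hby⟩, hmax⟩ := Set.exists_max_image
    {y | Y y ∧ ∃ b, B b ∧ G.Adj b y} (fun y => {w | W w ∧ G.Adj y w}.ncard)
    (Set.toFinite _) ⟨y0, hy0, b0, hb0, h10⟩
  have hyw1 : ∃ w1, W w1 ∧ G.Adj y w1 := by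
    have h1 := hmax y0 ⟨hy0, b0, hb0, h10⟩
    have h2 : 0 < {w | W w ∧ G.Adj y0 w}.ncard :=
      (Set.ncard_pos (Set.toFinite _)).2 ⟨w0, hw0, h20⟩
    exact (Set.ncard_pos (Set.toFinite _)).1 (lt_of_lt_of_le h2 h1)
  obtain ⟨w1, hw1, hyw1⟩ := hyw1
  have g := glob b y w1 hb hy hw1 hby hyw1
  have univ : ∀ v, B v → v = b ∨ G.Adj b v := by
    intro v hv; have := g v; grind
  have hall : ∀ w, W w → G.Adj y w := by
    intro w' hw'
    by_contra hn
    obtain ⟨y', hy', hyw', b', hb', hby'⟩ :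
      ∃ y', Y y' ∧ G.Adj y' w' ∧ ∃ b', B b' ∧ G.Adj b' y' := by
      rcases g w' with ⟨h, -⟩ | ⟨h, -⟩ | ⟨-, h⟩ | ⟨h, -⟩
      · exact absurd hw' (hBWd _ h)
      · exact absurd hw' (hYW _ h)
      · exact h
      · exact absurd hw' (hYW _ h)
    have : ∃ w2, W w2 ∧ G.Adj y w2 ∧ ¬ G.Adj y' w2 := by
      by_contra hcon
      push Not at hcon
      have := hmax y' ⟨hy', b', hb', hby'⟩
      have h3 : {w | W w ∧ G.Adj y w}.ncard < {w | W w ∧ G.Adj y' w}.ncard := by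
        apply Set.ncard_lt_ncard _ (Set.toFinite _)
        refine ⟨fun w hw => ⟨hw.1, hcon w hw.1 hw.2⟩, fun h => hn (h (a := w') ⟨hw', hyw'⟩).2⟩
      omega
    obtain ⟨w2, hw2, hyw2, hyw2'⟩ := this
    rcases univ b' hb' with h | h
    · subst h
      have e : ¬ G.Adj y y' := fun h => by
        have := hU y b' y' hy hby.symm h (hBWd _ hb) (hYW _ hy'); grind
      exact p5 w2 y b' y' w' hyw2.symm hby.symm hby' hyw' (fun h => hBW _ _ hb hw2 h.symm)
        (fun h => hyw2' h.symm) (hWW _ _ hw2 hw') e hn (hBW _ _ hb hw')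
    · exact hyw2' (four b y w2 b' y' hb hy hw2 hb' hy' hby hyw2 h hby').symm
  obtain ⟨w, hw, hwmax⟩ := Set.exists_max_image
    {w | W w} (fun w => {p | (Y p ∧ ∃ q, Y q ∧ G.Adj p q) ∧ G.Adj w p}.ncard)
    (Set.toFinite _) ⟨w1, hw1⟩
  have hw : W w := hw
  have hpairs : ∀ p, Y p → (∃ q, Y q ∧ G.Adj p q) → (∃ w', W w' ∧ G.Adj w' p) → G.Adj w p := by
    rintro p' hp' ⟨q', hq', hpq'⟩ ⟨w', hw', hwp'⟩
    by_contra hn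
    have : ∃ p, (Y p ∧ ∃ q, Y q ∧ G.Adj p q) ∧ G.Adj w p ∧ ¬ G.Adj w' p := by
      by_contra hcon
      push Not at hcon
      have := hwmax w' hw'
      have h3 : {p | (Y p ∧ ∃ q, Y q ∧ G.Adj p q) ∧ G.Adj w p}.ncard <
          {p | (Y p ∧ ∃ q, Y q ∧ G.Adj p q) ∧ G.Adj w' p}.ncard := by
        apply Set.ncard_lt_ncard _ (Set.toFinite _)
        refine ⟨fun p hp => ⟨hp.1, hcon p hp.1 hp.2⟩,
          fun h => hn (h (a := p') ⟨⟨hp', q', hq', hpq'⟩, hwp'⟩).2⟩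
      omega
    obtain ⟨p, ⟨hp, q, hq, hpq⟩, hwp, hwp2⟩ := this
    have e0 : ¬ G.Adj p p' := fun h =>
      hn (twin b y w p p' hb hy hw hp hp' hby (hall w hw) hwp h)
    have e1 : ∀ z, Y z → ¬ G.Adj y z := fun z hz h => by
      have := hU y b z hy hby.symm h (hBWd _ hb) (hYW _ hz); grind
    exact p5 p w y w' p' hwp.symm (hall w hw).symm (hall w' hw') hwp' (fun h => e1 p hp h.symm)
      (fun h => hwp2 h.symm) e0 (hWW _ _ hw hw') hn (e1 p' hp')
  refine ⟨b, y, w, hby, hall w hw, hb, hy, hw, ?_⟩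
  intro v
  rcases g v with ⟨hv, h | h⟩ | ⟨hv, b', hb', hbv⟩ | ⟨hv, -⟩ | ⟨hv, h, h'⟩
  · left; simp [h]
  · exact Or.inr ⟨b, by simp, h⟩
  · rcases univ b' hb' with h | h
    · subst h; exact Or.inr ⟨b', by simp, hbv⟩
    · exact Or.inr ⟨w, by simp, four b y w b' v hb hy hw hb' hv hby (hall w hw) h hbv⟩
  · exact Or.inr ⟨y, by simp, hall v hv⟩
  · exact Or.inr ⟨w, by simp, hpairs v hv h h'⟩

/-- If a connected `P₅`-free graph admits a proper perfect edge dominating set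
`P` (one whose associated color classes `B`, `Y`, `W` are all nonempty), then it
has a dominating induced `P₃` `v₁v₂v₃` whose triple of colors is one of
`(B,B,Y), (Y,B,B), (B,Y,W), (W,Y,B), (Y,B,Y), (W,Y,W), (Y,W,Y)`. -/
theorem proper_peds_dominating_p3 {V : Type*} [Fintype V] (G : SimpleGraph V)
    (hconn : G.Connected) (hfree : P5Free G) (P : Set (Sym2 V))
    (hP : IsPEDS G P) (hB : ∃ v, Blackv P v) (hY : ∃ v, Yellowv P v)
    (hW : ∃ v, Whitev P v) :
    ∃ v₁ v₂ v₃ : V, G.Adj v₁ v₂ ∧ G.Adj v₂ v₃ ∧ ¬ G.Adj v₁ v₃ ∧ v₁ ≠ v₃ ∧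
      IsDominating G {v₁, v₂, v₃} ∧
      ((Blackv P v₁ ∧ Blackv P v₂ ∧ Yellowv P v₃) ∨
       (Yellowv P v₁ ∧ Blackv P v₂ ∧ Blackv P v₃) ∨
       (Blackv P v₁ ∧ Yellowv P v₂ ∧ Whitev P v₃) ∨
       (Whitev P v₁ ∧ Yellowv P v₂ ∧ Blackv P v₃) ∨
       (Yellowv P v₁ ∧ Blackv P v₂ ∧ Yellowv P v₃) ∨
       (Whitev P v₁ ∧ Yellowv P v₂ ∧ Whitev P v₃) ∨
       (Yellowv P v₁ ∧ Whitev P v₂ ∧ Yellowv P v₃)) := by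
  have hsub := hP.1
  have hWhite : ∀ v u, Whitev P v → G.Adj v u → s(v, u) ∉ P := fun v u h _ h' => h _ h' (by simp)
  have hnn : ∀ v u, G.Adj v u → ¬ Whitev P v → ¬ Whitev P u → s(v, u) ∈ P := by
    intro v u hvu hv hu
    by_contra hn
    unfold Whitev at hv hu
    push Not at hv hu
    obtain ⟨e, he, hve⟩ := hv
    obtain ⟨f, hf, huf⟩ := hu
    have := (hP.2 s(v, u) hvu hn).unique ⟨he, v, hve, by simp⟩ ⟨hf, u, huf, by simp⟩
    subst this
    exact hn (((Sym2.mem_and_mem_iff hvu.ne).1 ⟨hve, huf⟩) ▸ he)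
  have hBP : ∀ v u, G.Adj v u → Blackv P v → s(v, u) ∈ P := by
    rintro v u hvu ⟨e, he, f, hf, hef, hve, hvf⟩
    by_contra hn
    exact hef ((hP.2 s(v, u) hvu hn).unique ⟨he, v, hve, by simp⟩ ⟨hf, v, hvf, by simp⟩)
  have hcol : ∀ v, Blackv P v ∨ Yellowv P v ∨ Whitev P v := by
    intro v
    by_cases hw : Whitev P v
    · exact Or.inr (Or.inr hw)
    unfold Whitev at hw
    push Not at hw
    obtain ⟨e, he, hve⟩ := hw
    by_cases hy : Yellowv P v
    · exact Or.inr (Or.inl hy)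
    left
    by_contra hb
    apply hy
    refine ⟨e, ⟨he, hve⟩, ?_⟩
    rintro f ⟨hf, hvf⟩
    by_contra hne
    exact hb ⟨f, hf, e, he, hne, hvf, hve⟩
  have hBWd : ∀ v, Blackv P v → ¬ Whitev P v := by
    rintro v ⟨e, he, f, hf, hef, hve, hvf⟩ h
    exact h e he hve
  have hYW : ∀ v, Yellowv P v → ¬ Whitev P v := by
    rintro v ⟨e, ⟨he, hve⟩, -⟩ h
    exact h e he hve
  have hBW : ∀ u v, Blackv P u → Whitev P v → ¬ G.Adj u v := by
    intro u v hu hv h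
    exact hv _ (hBP u v h hu) (by simp)
  obtain ⟨b, y, w, h1, h2, hb, hy, hw, hd⟩ := core_aux G hconn hfree (Blackv P) (Yellowv P)
    (Whitev P) hcol
    (by
      rintro v ⟨e, he, f, hf, hef, hve, hvf⟩ h
      exact hef (h.unique ⟨he, hve⟩ ⟨hf, hvf⟩))
    hBWd hYW hBW
    (by
      intro u v hu hv h
      obtain ⟨e, ⟨he, z, hz, hz'⟩, -⟩ := hP.2 s(u, v) h (hWhite u v hu h)
      rcases Sym2.mem_iff.1 hz' with rfl | rfl
      · exact hu e he hz
      · exact hv e he hz)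
    (by
      intro v u u' hv h h' hu hu'
      have := hv.unique ⟨hnn v u h (hYW _ hv) hu, by simp⟩ ⟨hnn v u' h' (hYW _ hv) hu', by simp⟩
      exact Sym2.congr_right.1 this)
    (by
      rintro v ⟨e, ⟨he, hve⟩, -⟩ hn
      obtain ⟨q, rfl⟩ := hve
      have hadj : G.Adj v q := hsub he
      refine ⟨q, ?_, hadj⟩
      rcases hcol q with h | h | h
      · exact absurd ⟨q, h, hadj.symm⟩ hn
      · exact h
      · exact absurd (show q ∈ s(v, q) by simp) (h _ he))
    hB hW
  refine ⟨b, y, w, h1, h2, hBW _ _ hb hw, ?_, hd, Or.inr (Or.inr (Or.inl ⟨hb, hy, hw⟩))⟩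
  rintro rfl
  exact hBWd _ hb hw
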